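/- arXiv:math/0511738 — 2 statements merged into one kernel-verified Lean document; each statement's English description precedes it below -/
import Mathlib

section
/- Let n ≥ 7 be an odd integer not divisible by 5. Let R ∈ SL₂(ℝ) be the rotation matrix ((cos(π/n), −sin(π/n)), (sin(π/n), cos(π/n))) and let T ∈ SL₂(ℝ) be the matrix ((1, 2(cos(π/n)+cos(π/5))/sin(π/n)), (0, 1)). Then the subgroup of PSL₂(ℝ) generated by the images of R and T is discrete and is isomorphic, as an abstract group, to the free product (ℤ/nℤ) ∗ (ℤ/5ℤ); that is, R and T generate the Fuchsian triangle group Δ(5,n,∞). -/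
/-!
In `PSL₂(ℝ)` the rotation `R` has order `n`, and `C = -(T * R⁻¹)`, which has trace
`2 * cos (π / 5)`, has order `5`; together they generate the same group as `R` and `T`. In the
basis `(1, 0)`, `(cos θ, sin θ)` with `θ = π / n` they become (`R_step`, `C_step`)
`R ~ !![0, -1; 1, 2 * cos θ]` and `C ~ !![2 * cos (π / 5), -1; 1, 0]`.
The entries of the powers of such matrices are quotients of sines. Their signs show
(`elliptic_pow`) that every nontrivial power of `R` sends vectors with coordinates of equal signs to
vectors with coordinates of opposite signs, and every nontrivial power of `C` does the reverse.

This is a ping-pong situation with open sets. The group acts on itself by left translation and the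
sets are given by the sign of the product of the two coordinates of the first column
(`coneForm`), which is well defined on `PSL₂(ℝ)`. The usual ping-pong argument shows that nonempty
reduced words are nontrivial. Here it is strengthened (`lift_word_prod_ne`): all of them avoid one
fixed neighbourhood of `1`, which gives the free product decomposition and discreteness at the same
time (`discrete_and_coprod_of_ping_pong`).
-/

open Real Matrix MatrixGroups

noncomputable section

/-- Topology on `SL(2, ℝ)` induced from the matrix topology. -/
instance : TopologicalSpace SL(2, ℝ) :=
  TopologicalSpace.induced (fun A => (A : Matrix (Fin 2) (Fin 2) ℝ)) inferInstance

/-- `PSL₂(ℝ)`: the quotient of `SL₂(ℝ)` by its center `{±1}`, with the quotient topology. -/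
abbrev PSL2R : Type := SL(2, ℝ) ⧸ Subgroup.center SL(2, ℝ)

/-! ### Ping-pong and discreteness -/

section PingPong

open Monoid Topology
open scoped Pointwise

/-- The homomorphism `ℤ/m → G` sending the generator to an element `g` with `g ^ m = 1`. -/
def cyclicHom {G : Type*} [Group G] (m : ℕ) (g : G) (hg : g ^ m = 1) :
    Multiplicative (ZMod m) →* G :=
  AddMonoidHom.toMultiplicativeLeft
    (ZMod.lift m ⟨zmultiplesHom (Additive G) (Additive.ofMul g), by
      simpa [← ofMul_pow] using hg⟩)

lemma cyclicHom_ofAdd_natCast {G : Type*} [Group G] (m : ℕ) (g : G) (hg : g ^ m = 1) (k : ℕ) :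
    cyclicHom m g hg (Multiplicative.ofAdd (k : ZMod m)) = g ^ k := by
  have h := ZMod.lift_coe m
    (⟨zmultiplesHom (Additive G) (Additive.ofMul g), by simpa [← ofMul_pow] using hg⟩ :
      {f : ℤ →+ Additive G // f m = 0}) (k : ℤ)
  simp only [Int.cast_natCast] at h
  simp [cyclicHom, h]

lemma cyclicHom_eq_pow {G : Type*} [Group G] (m : ℕ) [NeZero m] (g : G) (hg : g ^ m = 1)
    (h : Multiplicative (ZMod m)) : cyclicHom m g hg h = g ^ (Multiplicative.toAdd h).val := by
  rw [← cyclicHom_ofAdd_natCast m g hg]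
  simp

lemma range_cyclicHom {G : Type*} [Group G] (m : ℕ) [NeZero m] (g : G) (hg : g ^ m = 1) :
    (cyclicHom m g hg).range = Subgroup.closure {g} := by
  apply le_antisymm
  · rintro _ ⟨h, rfl⟩
    rw [cyclicHom_eq_pow]
    exact Subgroup.pow_mem _ (Subgroup.subset_closure (Set.mem_singleton g)) _
  · rw [Subgroup.closure_le, Set.singleton_subset_iff]
    exact MonoidHom.mem_range.2
      ⟨Multiplicative.ofAdd ((1 : ℕ) : ZMod m), by rw [cyclicHom_ofAdd_natCast, pow_one]⟩

/-- Quantitative ping-pong. A reduced word beginning and ending in the same factor `i` maps every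
other `X k` into `X i`; a reduced word beginning in `i` and ending in `j ≠ i` is conjugate to such
a word by an element of the factor `i`. Hence no element `g` all of whose conjugates by the factors
keep the base points `a k` in `X k` is the value of a nonempty reduced word. -/
theorem lift_word_prod_ne {ι G : Type*} [Group G] [Nontrivial ι] {H : ι → Type*}
    [∀ i, Group (H i)] (f : ∀ i, H i →* G)
    (hcard : ∀ i (x y : H i), ∃ h, h ≠ x ∧ h ≠ y)
    (X : ι → Set G) (hX : Pairwise fun i j => Disjoint (X i) (X j))
    (hpp : Pairwise fun i j => ∀ h : H i, h ≠ 1 → f i h • X j ⊆ X i)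
    (a : ι → G) (ha : ∀ i, a i ∈ X i) (g : G)
    (hg : ∀ i (h : H i) k, f i h * g * (f i h)⁻¹ * a k ∈ X k)
    {i j : ι} (w : CoprodI.NeWord H i j) : CoprodI.lift f w.prod ≠ g := by
  have same : ∀ {i : ι} (w : CoprodI.NeWord H i i) (h : H i),
      CoprodI.lift f w.prod ≠ f i h * g * (f i h)⁻¹ := by
    intro i w h heq
    obtain ⟨k, hk⟩ := exists_ne i
    have hsub := CoprodI.lift_word_ping_pong f X hpp w hk.symm
    have hmem : CoprodI.lift f w.prod * a k ∈ X i := hsub (Set.smul_mem_smul_set (ha k))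
    rw [heq] at hmem
    exact (hX hk).le_bot ⟨hg i h k, hmem⟩
  rintro rfl
  by_cases hij : i = j
  · subst hij
    exact same w 1 (by simp)
  · obtain ⟨h, h1, h2⟩ := hcard i 1 w.head⁻¹
    have hnot1 : h * w.head ≠ 1 := fun h3 => h2 (eq_inv_of_mul_eq_one_left h3)
    refine same (CoprodI.NeWord.append (CoprodI.NeWord.mulHead w h hnot1) (Ne.symm hij)
      (CoprodI.NeWord.singleton h⁻¹ (inv_ne_one.mpr h1))) h ?_
    simp

/-- Ping-pong for two finite cyclic groups acting on a topological group by left translation, with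
open ping-pong sets: the subgroup they generate is discrete and is their free product. -/
theorem discrete_and_coprod_of_ping_pong {G : Type*} [Group G] [TopologicalSpace G]
    [IsTopologicalGroup G] (p q : ℕ) (hp : 3 ≤ p) (hq : 3 ≤ q) (x y : G)
    (hxp : x ^ p = 1) (hyq : y ^ q = 1) (A B : Set G) (hA : IsOpen A) (hB : IsOpen B)
    (hAB : Disjoint A B) (hAne : A.Nonempty) (hBne : B.Nonempty)
    (hx : ∀ k, 0 < k → k < p → ∀ g ∈ B, x ^ k * g ∈ A)
    (hy : ∀ k, 0 < k → k < q → ∀ g ∈ A, y ^ k * g ∈ B) :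
    DiscreteTopology (Subgroup.closure {x, y}) ∧
      Nonempty (Subgroup.closure {x, y} ≃*
        Coprod (Multiplicative (ZMod p)) (Multiplicative (ZMod q))) := by
  have : NeZero p := ⟨by omega⟩
  have : NeZero q := ⟨by omega⟩
  let m : Bool → ℕ := fun b => cond b p q
  let γ : Bool → G := fun b => cond b x y
  let X : Bool → Set G := fun b => cond b A B
  have hm : ∀ b, 3 ≤ m b := by rintro (_ | _) <;> assumption
  have hm0 : ∀ b, NeZero (m b) := fun b => ⟨by have := hm b; omega⟩
  have hγ : ∀ b, γ b ^ m b = 1 := by rintro (_ | _) <;> assumption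
  have hXo : ∀ b, IsOpen (X b) := by rintro (_ | _) <;> assumption
  have hXne : ∀ b, (X b).Nonempty := by rintro (_ | _) <;> assumption
  have hXd : Pairwise fun b c => Disjoint (X b) (X c) := by
    rintro (_ | _) (_ | _) h
    exacts [absurd rfl h, hAB.symm, hAB, absurd rfl h]
  choose a ha using hXne
  let f : ∀ b, Multiplicative (ZMod (m b)) →* G := fun b => cyclicHom (m b) (γ b) (hγ b)
  have hcard : ∀ b (u v : Multiplicative (ZMod (m b))), ∃ h, h ≠ u ∧ h ≠ v := by
    intro b u v
    apply Cardinal.exists_ne_ne_of_three_le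
    have h3 : Cardinal.mk (Multiplicative (ZMod (m b))) = (m b : Cardinal) := by
      rw [Cardinal.mk_fintype]
      simp [ZMod.card]
    rw [h3]
    exact_mod_cast hm b
  have hpp : Pairwise fun b c => ∀ h : Multiplicative (ZMod (m b)), h ≠ 1 → f b h • X c ⊆ X b := by
    intro b c hbc h h1
    rintro _ ⟨g, hg, rfl⟩
    have hf : f b h = γ b ^ (Multiplicative.toAdd h).val := cyclicHom_eq_pow _ _ _ _
    have hpos : 0 < (Multiplicative.toAdd h).val := by
      rw [Nat.pos_iff_ne_zero, Ne, ZMod.val_eq_zero]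
      exact h1
    have hlt := ZMod.val_lt (Multiplicative.toAdd h)
    change f b h * g ∈ X b
    rw [hf]
    rcases b with _ | _ <;> rcases c with _ | _
    exacts [absurd rfl hbc, hy _ hpos hlt g hg, hx _ hpos hlt g hg, absurd rfl hbc]
  -- the neighbourhood of `1` avoided by all nonempty reduced words
  let N : Set G := ⋂ (b : Bool) (h : Multiplicative (ZMod (m b))) (c : Bool),
    {g | f b h * g * (f b h)⁻¹ * a c ∈ X c}
  have hNo : IsOpen N := by
    refine isOpen_iInter_of_finite fun b => isOpen_iInter_of_finite fun h =>
      isOpen_iInter_of_finite fun c => (hXo c).preimage ?_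
    fun_prop
  have hN1 : (1 : G) ∈ N := by simp [N, ha]
  have hNw : ∀ w : CoprodI (fun b => Multiplicative (ZMod (m b))),
      CoprodI.lift f w ∈ N → w = 1 := by
    intro w hw
    by_contra hne
    obtain ⟨w, rfl⟩ := CoprodI.Word.equiv.symm.surjective w
    have hne' : w ≠ CoprodI.Word.empty := by
      rintro rfl
      exact hne CoprodI.Word.prod_empty
    obtain ⟨i, j, w', rfl⟩ := CoprodI.NeWord.of_word w hne'
    refine lift_word_prod_ne f hcard X hXd hpp a ha _ ?_ w' rfl
    intro b h c
    exact Set.mem_iInter.1 (Set.mem_iInter.1 (Set.mem_iInter.1 hw b) h) c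
  -- transport from `CoprodI` over `Bool` to `Coprod`
  let e : Coprod (Multiplicative (ZMod p)) (Multiplicative (ZMod q)) →*
      CoprodI (fun b => Multiplicative (ZMod (m b))) :=
    Coprod.lift (CoprodI.of (M := fun b => Multiplicative (ZMod (m b))) (i := true))
      (CoprodI.of (M := fun b => Multiplicative (ZMod (m b))) (i := false))
  let φ : ∀ b, Multiplicative (ZMod (m b)) →*
      Coprod (Multiplicative (ZMod p)) (Multiplicative (ZMod q)) := fun b => match b with
    | true => Coprod.inl
    | false => Coprod.inr
  let e' : CoprodI (fun b => Multiplicative (ZMod (m b))) →*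
      Coprod (Multiplicative (ZMod p)) (Multiplicative (ZMod q)) :=
    CoprodI.lift φ
  have e_inl : ∀ t, e (Coprod.inl t) =
      CoprodI.of (M := fun b => Multiplicative (ZMod (m b))) (i := true) t :=
    fun t => Coprod.lift_apply_inl _ _ t
  have e_inr : ∀ t, e (Coprod.inr t) =
      CoprodI.of (M := fun b => Multiplicative (ZMod (m b))) (i := false) t :=
    fun t => Coprod.lift_apply_inr _ _ t
  have e'_of : ∀ (b : Bool) (t : Multiplicative (ZMod (m b))), e' (CoprodI.of t) = φ b t :=
    fun b t => CoprodI.lift_of φ t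
  have he : Function.LeftInverse e' e := by
    have : e'.comp e = MonoidHom.id _ := by
      apply Coprod.hom_ext
      · refine MonoidHom.ext fun t => ?_
        exact (congrArg e' (e_inl t)).trans (e'_of true t)
      · refine MonoidHom.ext fun t => ?_
        exact (congrArg e' (e_inr t)).trans (e'_of false t)
    exact fun t => DFunLike.congr_fun this t
  let F : Coprod (Multiplicative (ZMod p)) (Multiplicative (ZMod q)) →* G :=
    Coprod.lift (cyclicHom p x hxp) (cyclicHom q y hyq)
  have f_of : ∀ (b : Bool) (t : Multiplicative (ZMod (m b))),
      CoprodI.lift f (CoprodI.of t) = f b t := fun b t => CoprodI.lift_of f t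
  have hF : F = (CoprodI.lift f).comp e := by
    apply Coprod.hom_ext
    · refine MonoidHom.ext fun t => ?_
      have h1 : F (Coprod.inl t) = cyclicHom p x hxp t := Coprod.lift_apply_inl _ _ t
      exact h1.trans ((congrArg (CoprodI.lift f) (e_inl t)).trans (f_of true t)).symm
    · refine MonoidHom.ext fun t => ?_
      have h1 : F (Coprod.inr t) = cyclicHom q y hyq t := Coprod.lift_apply_inr _ _ t
      exact h1.trans ((congrArg (CoprodI.lift f) (e_inr t)).trans (f_of false t)).symm
  have hFN : ∀ t, F t ∈ N → t = 1 := by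
    intro t ht
    rw [hF] at ht
    exact he.injective ((hNw _ ht).trans (map_one e).symm)
  have hrange : F.range = Subgroup.closure {x, y} := by
    rw [Coprod.range_lift, range_cyclicHom, range_cyclicHom, ← Subgroup.closure_union,
      Set.singleton_union]
  have hinj : Function.Injective F :=
    (injective_iff_map_eq_one F).2 fun t ht => hFN t (ht ▸ hN1)
  rw [← hrange]
  refine ⟨discreteTopology_of_isOpen_singleton_one ?_, ⟨(MonoidHom.ofInjective hinj).symm⟩⟩
  have : ({1} : Set F.range) = Subtype.val ⁻¹' N := by
    ext ⟨_, t, rfl⟩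
    constructor
    · intro h
      have h' : F t = 1 := congrArg Subtype.val h
      simpa [h'] using hN1
    · intro h
      have := hFN t h
      subst this
      simp
  rw [this]
  exact hNo.preimage continuous_subtype_val

end PingPong

/-! ### The action of the generators on cone coordinates -/

section Coordinates

/-- The induced topology on `SL(2, ℝ)` is definitionally the subspace topology for which Mathlib
proves this. -/
instance : IsTopologicalGroup SL(2, ℝ) :=
  Matrix.SpecialLinearGroup.topologicalGroup

lemma sl_mul_apply (g h : SL(2, ℝ)) (i j : Fin 2) :
    (g * h) i j = g i 0 * h 0 j + g i 1 * h 1 j := by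
  simp [Matrix.mul_apply, Fin.sum_univ_two]

/-- Up to the factor `sin θ`, the first coordinate of the `j`-th column of `g` in the basis
`(1, 0)`, `(cos θ, sin θ)` of `ℝ²`; up to the same factor, the
second one is `g 1 j`. -/
def slopeCoord (θ : ℝ) (g : SL(2, ℝ)) (j : Fin 2) : ℝ := sin θ * g 0 j - cos θ * g 1 j

/-- If a pair of coordinates `(u k, v k)` evolves by the elliptic matrix
`!![0, -1; 1, 2 * cos φ]`, its values are given by the powers of that matrix. -/
lemma pow_coord_of_step {u v : ℕ → ℝ} {φ : ℝ}
    (hu : ∀ k, u (k + 1) = -v k) (hv : ∀ k, v (k + 1) = u k + 2 * cos φ * v k) (k : ℕ) :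
    sin φ * u k = -sin ((k - 1) * φ) * u 0 - sin (k * φ) * v 0 ∧
      sin φ * v k = sin (k * φ) * u 0 + sin ((k + 1) * φ) * v 0 := by
  induction k with
  | zero => simp
  | succ k ih =>
    obtain ⟨h1, h2⟩ := ih
    have e1 : sin (((k : ℝ) - 1) * φ) = sin (k * φ) * cos φ - cos (k * φ) * sin φ := by
      rw [sub_mul, one_mul, sin_sub]
    have e2 : sin (((k : ℝ) + 1) * φ) = sin (k * φ) * cos φ + cos (k * φ) * sin φ := by
      rw [add_mul, one_mul, sin_add]
    have e3 : sin (((k : ℝ) + 1 + 1) * φ) =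
        sin (((k : ℝ) + 1) * φ) * cos φ + cos (((k : ℝ) + 1) * φ) * sin φ := by
      rw [add_mul _ 1, one_mul, sin_add]
    have e4 : cos (((k : ℝ) + 1) * φ) = cos (k * φ) * cos φ - sin (k * φ) * sin φ := by
      rw [add_mul, one_mul, cos_add]
    rw [hu, hv]
    push_cast
    rw [e3, e4, e2, add_sub_cancel_right]
    rw [e1] at h1
    rw [e2] at h2
    constructor
    · linear_combination -h2
    · linear_combination h1 + 2 * cos φ * h2 + (sin (k * φ) * v 0) * (sin_sq_add_cos_sq φ)

/-- In the basis `(1, 0)`, `(cos θ, sin θ)`, the rotation `R` has matrix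
`!![0, -1; 1, 2 * cos θ]`. -/
lemma R_step {θ : ℝ} {R : SL(2, ℝ)}
    (hR : (R : Matrix (Fin 2) (Fin 2) ℝ) = !![cos θ, -sin θ; sin θ, cos θ])
    (g : SL(2, ℝ)) (j : Fin 2) :
    slopeCoord θ (R * g) j = -g 1 j ∧
      (R * g) 1 j = slopeCoord θ g j + 2 * cos θ * g 1 j := by
  simp only [slopeCoord, sl_mul_apply, hR]
  simp only [of_apply, cons_val', cons_val_zero, cons_val_one, cons_val_fin_one]
  constructor
  · linear_combination -(g 1 j) * sin_sq_add_cos_sq θ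
  · ring

/-- In the basis `(1, 0)`, `(cos θ, sin θ)`, the element `-(T * R⁻¹)` has matrix
`!![2 * cos φ, -1; 1, 0]`; reading the coordinates as `(second, -first)` turns this into
`!![0, -1; 1, 2 * cos φ]`. -/
lemma C_step {θ φ : ℝ} (hθ : sin θ ≠ 0) {R T : SL(2, ℝ)}
    (hR : (R : Matrix (Fin 2) (Fin 2) ℝ) = !![cos θ, -sin θ; sin θ, cos θ])
    (hT : (T : Matrix (Fin 2) (Fin 2) ℝ) = !![1, 2 * (cos θ + cos φ) / sin θ; 0, 1])
    (g : SL(2, ℝ)) (j : Fin 2) :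
    (-(T * R⁻¹) * g) 1 j = slopeCoord θ g j ∧
      slopeCoord θ (-(T * R⁻¹) * g) j = 2 * cos φ * slopeCoord θ g j - g 1 j := by
  have hRi : ((R⁻¹ : SL(2, ℝ)) : Matrix (Fin 2) (Fin 2) ℝ) = !![cos θ, sin θ; -sin θ, cos θ] := by
    rw [Matrix.SpecialLinearGroup.coe_inv, hR, adjugate_fin_two_of, neg_neg]
  simp only [slopeCoord, sl_mul_apply, Matrix.SpecialLinearGroup.coe_neg, Matrix.neg_apply, hT, hRi]
  simp only [of_apply, cons_val', cons_val_zero, cons_val_one, cons_val_fin_one]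
  constructor
  · ring
  · field_simp
    linear_combination -(g 1 j) * sin_sq_add_cos_sq θ

lemma sin_nat_mul_pi_div_pos {m k : ℕ} (h0 : 0 < k) (hk : k < m) : 0 < sin (k * (π / m)) := by
  have hm : (0 : ℝ) < m := by exact_mod_cast h0.trans hk
  have h0' : (0 : ℝ) < k := by exact_mod_cast h0
  have hk' : (k : ℝ) < m := by exact_mod_cast hk
  apply sin_pos_of_pos_of_lt_pi (by positivity)
  rw [mul_div_assoc', div_lt_iff₀ hm, mul_comm]
  exact mul_lt_mul_of_pos_left hk' pi_pos

lemma sin_nat_mul_pi_div_nonneg {m k : ℕ} (hk : k ≤ m) : 0 ≤ sin (k * (π / m)) := by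
  rcases Nat.eq_zero_or_pos k with rfl | h0
  · simp
  rcases hk.lt_or_eq with hk | rfl
  · exact (sin_nat_mul_pi_div_pos h0 hk).le
  · rw [mul_div_cancel₀ _ (by exact_mod_cast h0.ne'), sin_pi]

/-- The matrix `!![0, -1; 1, 2 * cos (π / m)]` has `m`-th power `-1`, and its
intermediate powers move coordinates of equal signs to coordinates of opposite signs. -/
lemma elliptic_pow {u v : ℕ → ℝ} {m : ℕ} (hm : 2 ≤ m)
    (hu : ∀ k, u (k + 1) = -v k) (hv : ∀ k, v (k + 1) = u k + 2 * cos (π / m) * v k) :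
    (u m = -u 0 ∧ v m = -v 0) ∧
      ∀ k, 0 < k → k < m → 0 < u 0 * v 0 → u k * v k < 0 := by
  have hs : 0 < sin (π / m) := by simpa using sin_nat_mul_pi_div_pos one_pos hm
  have hm0 : (m : ℝ) ≠ 0 := by exact_mod_cast (by omega : m ≠ 0)
  have hmp : (m : ℝ) * (π / m) = π := mul_div_cancel₀ _ hm0
  constructor
  · obtain ⟨h1, h2⟩ := pow_coord_of_step hu hv m
    rw [sub_mul, one_mul, hmp, sin_pi_sub, sin_pi] at h1
    rw [add_mul, one_mul, hmp, add_comm π, sin_add_pi, sin_pi] at h2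
    constructor
    · apply mul_left_cancel₀ hs.ne'
      linear_combination h1
    · apply mul_left_cancel₀ hs.ne'
      linear_combination h2
  · intro k hk0 hkm hpos
    obtain ⟨h1, h2⟩ := pow_coord_of_step hu hv k
    have ha : 0 ≤ sin (((k : ℝ) - 1) * (π / m)) := by
      have := sin_nat_mul_pi_div_nonneg (m := m) (k := k - 1) (by omega)
      rwa [Nat.cast_sub hk0, Nat.cast_one] at this
    have hb := sin_nat_mul_pi_div_pos hk0 hkm
    have hc : 0 ≤ sin (((k : ℝ) + 1) * (π / m)) := by
      have := sin_nat_mul_pi_div_nonneg (m := m) (k := k + 1) (by omega)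
      rwa [Nat.cast_add, Nat.cast_one] at this
    have key : (sin (π / m) * u k) * (sin (π / m) * v k) < 0 := by
      rw [h1, h2]
      generalize sin (((k : ℝ) - 1) * (π / m)) = A at *
      generalize sin ((k : ℝ) * (π / m)) = B at *
      generalize sin (((k : ℝ) + 1) * (π / m)) = C at *
      -- the product is `-(A B u² + (A C + B²) u v + B C v²)` with `A, C ≥ 0` and `B > 0`
      nlinarith [mul_nonneg ha hb.le, mul_nonneg hb.le hc, mul_nonneg ha hc,
        mul_pos (mul_pos hb hb) hpos, sq_nonneg (u 0), sq_nonneg (v 0),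
        mul_nonneg (mul_nonneg ha hb.le) (sq_nonneg (u 0)),
        mul_nonneg (mul_nonneg hb.le hc) (sq_nonneg (v 0)),
        mul_nonneg (mul_nonneg ha hc) hpos.le]
    by_contra hcon
    push Not at hcon
    nlinarith [mul_nonneg (mul_pos hs hs).le hcon]

/-- The product of the two coordinates of the first column of `g`; it is positive when that column
points into the double cone spanned by `(1, 0)` and `(cos θ, sin θ)`. -/
def coneForm (θ : ℝ) (g : SL(2, ℝ)) : ℝ := slopeCoord θ g 0 * g 1 0

lemma coneForm_neg (θ : ℝ) (g : SL(2, ℝ)) : coneForm θ (-g) = coneForm θ g := by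
  simp only [coneForm, slopeCoord, Matrix.SpecialLinearGroup.coe_neg, Matrix.neg_apply]
  ring

lemma exists_coneForm_eq {θ : ℝ} (hθ : sin θ ≠ 0) (t : ℝ) :
    ∃ g : SL(2, ℝ), coneForm θ g = t := by
  refine ⟨⟨!![(cos θ + t) / sin θ, -1; 1, 0], by simp [det_fin_two_of]⟩, ?_⟩
  simp [coneForm, slopeCoord]
  field_simp
  ring

lemma eq_neg_one_of_coord {θ : ℝ} (hθ : sin θ ≠ 0) {g : SL(2, ℝ)}
    (h0 : ∀ j, slopeCoord θ g j = -slopeCoord θ 1 j)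
    (h1 : ∀ j, g 1 j = -(1 : SL(2, ℝ)) 1 j) : g = -1 := by
  have h : ∀ j, g 0 j = -(1 : SL(2, ℝ)) 0 j := by
    intro j
    have := h0 j
    simp only [slopeCoord] at this
    apply mul_left_cancel₀ hθ
    linear_combination this + cos θ * h1 j
  ext i j
  fin_cases i
  · simpa using h j
  · simpa using h1 j

lemma continuous_sl_apply (i j : Fin 2) : Continuous fun g : SL(2, ℝ) => g i j :=
  (continuous_induced_dom (f := fun A : SL(2, ℝ) => (A : Matrix (Fin 2) (Fin 2) ℝ))).matrix_elem i j

lemma continuous_coneForm (θ : ℝ) : Continuous (coneForm θ) :=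
  ((continuous_const.mul (continuous_sl_apply 0 0)).sub
    (continuous_const.mul (continuous_sl_apply 1 0))).mul (continuous_sl_apply 1 0)

lemma eq_or_eq_neg_of_mk_eq {g h : SL(2, ℝ)}
    (hgh : (QuotientGroup.mk g : PSL2R) = QuotientGroup.mk h) : h = g ∨ h = -g := by
  rw [QuotientGroup.eq, Matrix.SpecialLinearGroup.mem_center_iff] at hgh
  obtain ⟨r, hr, hr'⟩ := hgh
  have hr2 : r = 1 ∨ r = -1 := by simpa using hr
  have hh : h = g * (g⁻¹ * h) := by group
  rcases hr2 with rfl | rfl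
  · left
    have : g⁻¹ * h = 1 := by
      ext i j
      rw [← hr']
      simp
    rw [hh, this, mul_one]
  · right
    have : g⁻¹ * h = -1 := by
      ext i j
      rw [← hr']
      fin_cases i <;> fin_cases j <;> simp
    rw [hh, this]
    simp

lemma mk_neg_one : (QuotientGroup.mk (-1 : SL(2, ℝ)) : PSL2R) = 1 := by
  rw [QuotientGroup.eq_one_iff, Matrix.SpecialLinearGroup.mem_center_iff]
  exact ⟨-1, by simp, by ext i j; fin_cases i <;> fin_cases j <;> simp⟩

end Coordinates

/-! ### The triangle group -/

/-- Let `n ≥ 7` be odd and not divisible by 5.  The images in `PSL₂(ℝ)` of the rotation `R`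
by `π/n` and of the parabolic `T = [[1, 2(cos(π/n)+cos(π/5))/sin(π/n)], [0,1]]` generate a
discrete subgroup isomorphic to `ℤ/n ∗ ℤ/5`, i.e. the Fuchsian triangle group
`Δ(5, n, ∞)`. -/
theorem veech_ward_bouw_moeller_triangle_group_5_n_infty
    (n : ℕ) (hn : 7 ≤ n) (hodd : Odd n) (h5 : ¬ (5 ∣ n))
    (R T : SL(2, ℝ))
    (hR : (R : Matrix (Fin 2) (Fin 2) ℝ) =
      !![Real.cos (π / n), -Real.sin (π / n); Real.sin (π / n), Real.cos (π / n)])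
    (hT : (T : Matrix (Fin 2) (Fin 2) ℝ) =
      !![1, 2 * (Real.cos (π / n) + Real.cos (π / 5)) / Real.sin (π / n); 0, 1])
    (Γ : Subgroup PSL2R)
    (hΓ : Γ = Subgroup.closure {QuotientGroup.mk R, QuotientGroup.mk T}) :
    DiscreteTopology Γ ∧
      Nonempty (Γ ≃* Monoid.Coprod (Multiplicative (ZMod n)) (Multiplicative (ZMod 5))) := by
  have hθ : 0 < sin (π / n) := by
    simpa using sin_nat_mul_pi_div_pos (m := n) one_pos (by omega)
  set θ := π / n with hθdef
  -- the generator of order 5; its trace is `2 * cos (π / 5)`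
  set C : SL(2, ℝ) := -(T * R⁻¹) with hC
  have hRs : ∀ (g : SL(2, ℝ)) (j : Fin 2),
      ((slopeCoord θ (R ^ n * g) j = -slopeCoord θ g j ∧ (R ^ n * g) 1 j = -g 1 j) ∧
        ∀ k, 0 < k → k < n → 0 < slopeCoord θ g j * g 1 j →
          slopeCoord θ (R ^ k * g) j * (R ^ k * g) 1 j < 0) := by
    intro g j
    have := elliptic_pow (m := n) (by omega) (u := fun k => slopeCoord θ (R ^ k * g) j)
      (v := fun k => (R ^ k * g) 1 j)
      (fun k => by
        rw [pow_succ', mul_assoc]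
        exact (R_step hR _ j).1)
      (fun k => by
        rw [pow_succ', mul_assoc]
        exact (R_step hR _ j).2)
    simpa only [pow_zero, one_mul] using this
  have hCs : ∀ (g : SL(2, ℝ)) (j : Fin 2),
      (((C ^ 5 * g) 1 j = -g 1 j ∧ -slopeCoord θ (C ^ 5 * g) j = - -slopeCoord θ g j) ∧
        ∀ k, 0 < k → k < 5 → 0 < g 1 j * -slopeCoord θ g j →
          (C ^ k * g) 1 j * -slopeCoord θ (C ^ k * g) j < 0) := by
    intro g j
    have := elliptic_pow (m := 5) (by omega) (u := fun k => (C ^ k * g) 1 j)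
      (v := fun k => -slopeCoord θ (C ^ k * g) j)
      (fun k => by
        rw [pow_succ', mul_assoc, neg_neg]
        exact (C_step hθ.ne' hR hT _ j).1)
      (fun k => by
        rw [pow_succ', mul_assoc, hC, (C_step hθ.ne' hR hT _ j).2]
        push_cast
        ring)
    simpa only [pow_zero, one_mul] using this
  have hRn : R ^ n = -1 := eq_neg_one_of_coord hθ.ne'
    (fun j => by simpa only [mul_one] using (hRs 1 j).1.1)
    (fun j => by simpa only [mul_one] using (hRs 1 j).1.2)
  have hC5 : C ^ 5 = -1 := eq_neg_one_of_coord hθ.ne'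
    (fun j => by simpa only [mul_one, neg_inj] using (hCs 1 j).1.2)
    (fun j => by simpa only [mul_one] using (hCs 1 j).1.1)
  have hCmk : (QuotientGroup.mk C : PSL2R) = QuotientGroup.mk T * (QuotientGroup.mk R)⁻¹ := by
    have : C = -1 * (T * R⁻¹) := by simp [hC]
    rw [this, QuotientGroup.mk_mul, mk_neg_one, one_mul, QuotientGroup.mk_mul, QuotientGroup.mk_inv]
  have hΓ' : Γ = Subgroup.closure {QuotientGroup.mk R, QuotientGroup.mk C} := by
    rw [hΓ]
    apply le_antisymm <;> rw [Subgroup.closure_le, Set.insert_subset_iff, Set.singleton_subset_iff]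
    · have hr : (QuotientGroup.mk R : PSL2R) ∈ Subgroup.closure
          {(QuotientGroup.mk R : PSL2R), QuotientGroup.mk C} :=
        Subgroup.subset_closure (Set.mem_insert _ _)
      have hc : (QuotientGroup.mk C : PSL2R) ∈ Subgroup.closure
          {(QuotientGroup.mk R : PSL2R), QuotientGroup.mk C} :=
        Subgroup.subset_closure (Set.mem_insert_of_mem _ (Set.mem_singleton _))
      have hT' : (QuotientGroup.mk T : PSL2R) = QuotientGroup.mk C * QuotientGroup.mk R := by
        rw [hCmk, inv_mul_cancel_right]
      refine ⟨hr, ?_⟩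
      rw [hT']
      exact mul_mem hc hr
    · have hr : (QuotientGroup.mk R : PSL2R) ∈ Subgroup.closure
          {(QuotientGroup.mk R : PSL2R), QuotientGroup.mk T} :=
        Subgroup.subset_closure (Set.mem_insert _ _)
      have ht : (QuotientGroup.mk T : PSL2R) ∈ Subgroup.closure
          {(QuotientGroup.mk R : PSL2R), QuotientGroup.mk T} :=
        Subgroup.subset_closure (Set.mem_insert_of_mem _ (Set.mem_singleton _))
      refine ⟨hr, ?_⟩
      rw [hCmk]
      exact mul_mem ht (inv_mem hr)
  -- `coneForm` is invariant under `-1`, hence descends to `PSL₂(ℝ)`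
  let Q : PSL2R → ℝ := Quotient.lift (coneForm θ) (by
    intro g h hgh
    rcases eq_or_eq_neg_of_mk_eq (Quotient.sound hgh) with rfl | rfl
    · rfl
    · exact (coneForm_neg θ g).symm)
  have hQc : Continuous Q := (continuous_coneForm θ).quotient_lift _
  have hQ : ∀ g : SL(2, ℝ), Q (QuotientGroup.mk g) = coneForm θ g := fun _ => rfl
  rw [hΓ']
  refine discrete_and_coprod_of_ping_pong n 5 (by omega) (by omega) _ _ ?_ ?_
    {g | Q g < 0} {g | 0 < Q g} (isOpen_lt hQc continuous_const) (isOpen_lt continuous_const hQc)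
    ?_ ?_ ?_ ?_ ?_
  · rw [← QuotientGroup.mk_pow, hRn, mk_neg_one]
  · rw [← QuotientGroup.mk_pow, hC5, mk_neg_one]
  · exact Set.disjoint_left.2 fun g (h1 : Q g < 0) (h2 : 0 < Q g) => lt_asymm h1 h2
  · obtain ⟨g, hg⟩ := exists_coneForm_eq hθ.ne' (-1)
    exact ⟨QuotientGroup.mk g, by simp [hQ, hg]⟩
  · obtain ⟨g, hg⟩ := exists_coneForm_eq hθ.ne' 1
    exact ⟨QuotientGroup.mk g, by simp [hQ, hg]⟩
  · intro k hk0 hkn g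
    induction g using QuotientGroup.induction_on with | H g => ?_
    intro (hg : 0 < coneForm θ g)
    exact (hRs g 0).2 k hk0 hkn hg
  · intro k hk0 hk5 g
    induction g using QuotientGroup.induction_on with | H g => ?_
    intro (hg : coneForm θ g < 0)
    have h := (hCs g 0).2 k hk0 hk5 (by rw [coneForm] at hg; linarith)
    change 0 < coneForm θ (C ^ k * g)
    rw [coneForm]
    linarith

end
end

section
/- Let n ≥ 7 be an odd integer not divisible by 5. Then the quotient of improper Riemann integrals ( ∫_{2cos(2π/5)}^{2} (2−u)^{1/(2n)−1}·(u−2cos(2π/5))^{1/n−1}·(u−2cos(4π/5))^{1/n−1} du ) / ( ∫_{2}^{∞} (u−2)^{1/(2n)−1}·(u−2cos(2π/5))^{1/n−1}·(u−2cos(4π/5))^{1/n−1} du ) equals (cos(π/n) + cos(π/5)) / cos(π/(2n)). Consequently the quadrilateral T[5,n,∞] obtained from the Schwarz–Christoffel map with these exponents is similar to the billiard table T(5,n,∞). -/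
open Real MeasureTheory intervalIntegral

noncomputable section

/-!
Put `α = 1/n`. Since `(u - 2cos(2π/5)) (u - 2cos(4π/5)) = u² + u - 1`, which at `u = 2cos 2t` equals
`sin 5t / sin t` and at `u = 2cosh 2t` equals `sinh 5t / sinh t`, the substitutions `u = 2cos(2x/5)`
and `u = 2cosh(2y/5)` turn the two side lengths into `4/5` times

* `S = ∫₀^π (2 sin x)^(α-1) cos(x/5) dx` and
* `(C₊ + C₋)/2`, where `C_± = ∫₀^∞ (2 sinh y)^(α-1) e^{±y/5} dy`

(`bounded_side_eq`, `unbounded_side_eq`).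

These are related by Cauchy's theorem for `(2 sinh z)^(α-1) e^{bz}` on the rectangle
`[d, R] × [0, π]`. As `R → ∞` the right edge disappears because `α + b < 1`, and as `d → 0` the left
edge converges by dominated convergence, `|sinh (d + ix)| ≥ sin x` providing the majorant. For
`b = ±1/5` the limit, divided by its phase `e^{iπα/2}`, has real part (`contour_real`)
`(cos(πα/2) + cos(πα/2 ± π/5)) C_± = S`.
Solving for `C_±` and adding, sum-to-product formulas give
`S / ((C₊ + C₋)/2) = (cos(πα) + cos(π/5)) / cos(πα/2)` (`ratio_core`).
The argument works for every real `0 < α < 4/5`.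
-/

/-! ### The contour identity -/

/-- The holomorphic function `(2 sinh z)^(α-1) e^{bz}` on the half strip `Re z > 0`, `0 ≤ Im z ≤ π`.
Factoring `2 sinh z = e^z (1 - e^{-2z})` selects the branch: `1 - e^{-2z}` has positive real part there,
so the principal power of that factor is holomorphic, and the branch is real on the positive axis. -/
def schKernel (α b : ℝ) (z : ℂ) : ℂ :=
  Complex.exp (((α - 1 + b : ℝ) : ℂ) * z) * (1 - Complex.exp (-2 * z)) ^ ((α - 1 : ℝ) : ℂ)

lemma re_one_sub_exp_pos {z : ℂ} (hz : 0 < z.re) : 0 < (1 - Complex.exp (-2 * z)).re := by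
  have h1 : ‖Complex.exp (-2 * z)‖ < 1 := by
    rw [Complex.norm_exp]
    apply Real.exp_lt_one_iff.2
    simp; linarith
  have h2 := Complex.re_le_norm (Complex.exp (-2 * z))
  rw [Complex.sub_re, Complex.one_re]
  linarith

lemma schKernel_differentiableAt (α b : ℝ) {z : ℂ} (hz : 0 < (1 - Complex.exp (-2 * z)).re) :
    DifferentiableAt ℂ (schKernel α b) z := by
  unfold schKernel
  refine DifferentiableAt.mul (by fun_prop) ?_
  exact DifferentiableAt.cpow_const (by fun_prop) (Or.inl hz)

lemma schKernel_ofReal (α b : ℝ) {y : ℝ} (hy : 0 < y) :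
    schKernel α b y = (((2 * Real.sinh y) ^ (α - 1) * Real.exp (b * y) : ℝ) : ℂ) := by
  have h0 : 0 < 1 - Real.exp (-2 * y) := by
    have : Real.exp (-2 * y) < 1 := Real.exp_lt_one_iff.2 (by linarith)
    linarith
  have h1 : 2 * Real.sinh y = Real.exp y * (1 - Real.exp (-2 * y)) := by
    rw [Real.sinh_eq, mul_sub, ← Real.exp_add]; ring_nf
  rw [h1, Real.mul_rpow (Real.exp_pos _).le h0.le, ← Real.exp_mul]
  have h2 : Real.exp (y * (α - 1)) * (1 - Real.exp (-2 * y)) ^ (α - 1) * Real.exp (b * y)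
      = Real.exp ((α - 1 + b) * y) * (1 - Real.exp (-2 * y)) ^ (α - 1) := by
    rw [mul_right_comm, ← Real.exp_add]; ring_nf
  rw [h2, schKernel, Complex.ofReal_mul, Complex.ofReal_cpow h0.le]
  push_cast
  rfl

lemma schKernel_add_pi (α b : ℝ) (z : ℂ) :
    schKernel α b (z + π * Complex.I)
      = Complex.exp (((α - 1 + b) * π : ℝ) * Complex.I) * schKernel α b z := by
  have h1 : Complex.exp (-2 * (z + π * Complex.I)) = Complex.exp (-2 * z) := by
    have : -2 * (z + π * Complex.I) = -2 * z - 2 * π * Complex.I := by ring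
    rw [this, Complex.exp_sub, Complex.exp_two_pi_mul_I, div_one]
  rw [schKernel, schKernel, h1, mul_add, Complex.exp_add]
  push_cast
  ring_nf

lemma one_sub_exp_imag (x : ℝ) :
    1 - Complex.exp (-2 * (x * Complex.I))
      = ((2 * Real.sin x : ℝ) : ℂ) * Complex.exp (((π / 2 - x : ℝ) : ℂ) * Complex.I) := by
  have e1 : (-2 * (x * Complex.I) : ℂ) = ((-2 * x : ℝ) : ℂ) * Complex.I := by push_cast; ring
  rw [e1, Complex.exp_mul_I, Complex.exp_mul_I, ← Complex.ofReal_cos, ← Complex.ofReal_sin,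
    ← Complex.ofReal_cos, ← Complex.ofReal_sin, Real.cos_pi_div_two_sub,
    Real.sin_pi_div_two_sub, neg_mul, Real.cos_neg, Real.sin_neg, Real.cos_two_mul,
    Real.sin_two_mul]
  have := Real.sin_sq_add_cos_sq x
  apply Complex.ext
  · simp [-Complex.ofReal_cos, -Complex.ofReal_sin, sq]; nlinarith
  · simp [-Complex.ofReal_cos, -Complex.ofReal_sin, sq]

/-- On the edge `Re z = 0` one has `2 sinh (ix) = 2 sin x · e^{iπ/2}`, so the kernel has the constant
phase `e^{i(α-1)π/2}` next to `e^{ibx}`. In terms of the principal branch, `1 - e^{-2ix}` has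
argument `π/2 - x`. -/
lemma schKernel_imag (α b : ℝ) {x : ℝ} (h0 : 0 < x) (h1 : x < π) :
    schKernel α b (x * Complex.I)
      = (((2 * Real.sin x) ^ (α - 1) : ℝ) : ℂ)
        * Complex.exp ((((α - 1) * (π / 2) + b * x : ℝ) : ℂ) * Complex.I) := by
  have hs : 0 < 2 * Real.sin x := by have := Real.sin_pos_of_pos_of_lt_pi h0 h1; linarith
  have hpow : (((2 * Real.sin x : ℝ) : ℂ) * Complex.exp (((π / 2 - x : ℝ) : ℂ) * Complex.I))
        ^ ((α - 1 : ℝ) : ℂ)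
      = (((2 * Real.sin x) ^ (α - 1) : ℝ) : ℂ)
        * Complex.exp ((((α - 1) * (π / 2 - x) : ℝ) : ℂ) * Complex.I) := by
    rw [Complex.cpow_def_of_ne_zero
        (mul_ne_zero (Complex.ofReal_ne_zero.2 hs.ne') (Complex.exp_ne_zero _)),
      Complex.log_ofReal_mul hs (Complex.exp_ne_zero _), Complex.log_exp, add_mul,
      Complex.exp_add, Real.rpow_def_of_pos hs]
    · push_cast; ring_nf
    · simp; linarith
    · simp; linarith
  rw [schKernel, one_sub_exp_imag, hpow, mul_left_comm, ← Complex.exp_add]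
  congr 2
  push_cast
  ring

lemma norm_schKernel (α b : ℝ) {z : ℂ} (hz : 0 < z.re) :
    ‖schKernel α b z‖
      = Real.exp ((α - 1 + b) * z.re) * ‖1 - Complex.exp (-2 * z)‖ ^ (α - 1) := by
  have hne : (1 - Complex.exp (-2 * z)) ≠ 0 := by
    intro h
    have := re_one_sub_exp_pos hz
    rw [h] at this
    simp at this
  rw [schKernel, norm_mul, Complex.norm_exp, Complex.norm_cpow_of_ne_zero hne]
  simp

/-- This is `|sinh (d + ix)| ≥ sin x`. It bounds the kernel on the vertical segments `Re z = d`
uniformly as `d → 0`, by an integrable function of `x`. -/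
lemma le_norm_one_sub_exp_of_sin (d x : ℝ) :
    2 * Real.exp (-d) * Real.sin x ≤ ‖1 - Complex.exp (-2 * (d + x * Complex.I))‖ := by
  refine le_trans (le_abs_self _) ?_
  rw [← sq_le_sq₀ (abs_nonneg _) (norm_nonneg _), sq_abs, ← Complex.normSq_eq_norm_sq,
    Complex.normSq_apply]
  have hre : (1 - Complex.exp (-2 * (d + x * Complex.I))).re
      = 1 - Real.exp (-d) ^ 2 * (1 - 2 * Real.sin x ^ 2) := by
    rw [← Real.exp_nat_mul, Complex.sub_re, Complex.exp_re,
      show 1 - 2 * Real.sin x ^ 2 = Real.cos (2 * x) by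
        rw [Real.cos_two_mul, Real.cos_sq']; ring]
    simp
  have him : (1 - Complex.exp (-2 * (d + x * Complex.I))).im
      = Real.exp (-d) ^ 2 * (2 * Real.sin x * Real.cos x) := by
    rw [← Real.exp_nat_mul, Complex.sub_im, Complex.exp_im, ← Real.sin_two_mul]
    simp
  rw [hre, him]
  have := Real.sin_sq_add_cos_sq x
  set E := Real.exp (-d) ^ 2
  have key : (1 - E * (1 - 2 * Real.sin x ^ 2)) * (1 - E * (1 - 2 * Real.sin x ^ 2))
      + E * (2 * Real.sin x * Real.cos x) * (E * (2 * Real.sin x * Real.cos x))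
      = (1 - E) ^ 2 + 4 * E * Real.sin x ^ 2 := by
    have : Real.cos x ^ 2 = 1 - Real.sin x ^ 2 := by linarith
    ring_nf
    rw [this]
    ring
  rw [key]
  have : (2 * Real.exp (-d) * Real.sin x) ^ 2 = 4 * E * Real.sin x ^ 2 := by simp only [E]; ring
  rw [this]
  nlinarith [sq_nonneg (1 - E)]

lemma intervalIntegrable_sin_rpow {α : ℝ} (h0 : 0 < α) (h1 : α < 1) :
    IntervalIntegrable (fun x : ℝ => (2 * Real.sin x) ^ (α - 1)) volume 0 π := by
  have hmeas : Measurable (fun x : ℝ => (2 * Real.sin x) ^ (α - 1)) := by fun_prop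
  have hhalf : IntervalIntegrable (fun x : ℝ => (2 * Real.sin x) ^ (α - 1)) volume 0 (π / 2) := by
    have hb : IntervalIntegrable (fun x : ℝ => x ^ (α - 1)) volume 0 (π / 2) :=
      intervalIntegrable_rpow' (by linarith)
    refine hb.mono_fun hmeas.aestronglyMeasurable ?_
    rw [Filter.EventuallyLE, ae_restrict_iff' measurableSet_uIoc]
    refine Filter.Eventually.of_forall fun x hx => ?_
    rw [Set.uIoc_of_le (by positivity)] at hx
    have hs := Real.mul_le_sin hx.1.le hx.2
    have hle : x ≤ 2 * Real.sin x := by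
      have : (1:ℝ) ≤ 2 * (2 / π) := by
        rw [← mul_div_assoc, le_div_iff₀ Real.pi_pos]; linarith [Real.pi_le_four]
      nlinarith [hx.1]
    have hx0 := hx.1
    rw [Real.norm_of_nonneg (by apply Real.rpow_nonneg; linarith),
      Real.norm_of_nonneg (by positivity)]
    exact Real.rpow_le_rpow_of_nonpos hx.1 hle (by linarith)
  -- The singularity at `π` is the mirror image of the one at `0`.
  refine hhalf.trans ?_
  have := hhalf.comp_sub_left π
  simp only [Real.sin_pi_sub] at this
  rw [sub_zero, show π - π / 2 = π / 2 by ring] at this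
  exact this.symm

lemma integrableOn_sinh_rpow {α b : ℝ} (h0 : 0 < α) (h1 : α < 1) (hb : α + b < 1) :
    IntegrableOn (fun y : ℝ => (2 * Real.sinh y) ^ (α - 1) * Real.exp (b * y)) (Set.Ioi 0) := by
  have hc : 0 < 1 - α - b := by linarith
  have hbound : IntegrableOn (fun y : ℝ => (1 / 2 : ℝ) ^ (α - 1) * Real.exp (-(1 - α - b) * y)
      + (1 / 2 : ℝ) ^ (α - 1) * (y ^ (α - 1) * Real.exp (-(1 - α - b) * y ^ (1 : ℝ))))
      (Set.Ioi 0) := by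
    refine Integrable.add ?_ ?_
    · exact (exp_neg_integrableOn_Ioi 0 hc).const_mul _
    · exact (integrableOn_rpow_mul_exp_neg_mul_rpow (by linarith) one_pos hc).const_mul _
  refine Integrable.mono' hbound (by fun_prop) ?_
  rw [ae_restrict_iff' measurableSet_Ioi]
  refine Filter.Eventually.of_forall fun y (hy : 0 < y) => ?_
  have hsinh : 2 * Real.sinh y = Real.exp y * (1 - Real.exp (-2 * y)) := by
    rw [Real.sinh_eq, mul_sub, ← Real.exp_add]; ring_nf
  have hpos : 0 < 1 - Real.exp (-2 * y) := by
    have : Real.exp (-2 * y) < 1 := Real.exp_lt_one_iff.2 (by linarith)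
    linarith
  have hfrac : Real.exp (-2 * y) ≤ 1 / (1 + 2 * y) := by
    rw [show -2 * y = -(2 * y) by ring, Real.exp_neg, ← one_div]
    apply one_div_le_one_div_of_le (by linarith)
    linarith [Real.add_one_le_exp (2 * y)]
  -- `1 - e^{-2y} ≥ min 1 y / 2`; adding the bounds of the two cases covers both at once.
  have hmain : (1 - Real.exp (-2 * y)) ^ (α - 1)
      ≤ (1 / 2 : ℝ) ^ (α - 1) + (1 / 2 : ℝ) ^ (α - 1) * y ^ (α - 1) := by
    rcases le_total 1 y with h | h
    · have : (1 / 2 : ℝ) ≤ 1 - Real.exp (-2 * y) := by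
        have : 1 / (1 + 2 * y) ≤ 1 / 2 := one_div_le_one_div_of_le (by norm_num) (by linarith)
        linarith
      have := Real.rpow_le_rpow_of_nonpos (by norm_num) this (show α - 1 ≤ 0 by linarith)
      have h2 : 0 ≤ (1 / 2 : ℝ) ^ (α - 1) * y ^ (α - 1) := by positivity
      linarith
    · have : (1 / 2 : ℝ) * y ≤ 1 - Real.exp (-2 * y) := by
        have : 1 / (1 + 2 * y) ≤ 1 - 1 / 2 * y := by
          rw [div_le_iff₀ (by linarith)]; nlinarith
        linarith
      have := Real.rpow_le_rpow_of_nonpos (by positivity) this (show α - 1 ≤ 0 by linarith)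
      rw [Real.mul_rpow (by norm_num) hy.le] at this
      have h2 : 0 ≤ (1 / 2 : ℝ) ^ (α - 1) := by positivity
      linarith
  rw [Real.norm_of_nonneg (mul_nonneg (Real.rpow_nonneg (by rw [hsinh]; positivity) _)
    (Real.exp_pos _).le), hsinh, Real.mul_rpow (Real.exp_pos _).le hpos.le, ← Real.exp_mul,
    Real.rpow_one]
  have h2 : Real.exp (y * (α - 1)) * (1 - Real.exp (-2 * y)) ^ (α - 1) * Real.exp (b * y)
      = Real.exp (-(1 - α - b) * y) * (1 - Real.exp (-2 * y)) ^ (α - 1) := by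
    rw [mul_right_comm, ← Real.exp_add]; ring_nf
  rw [h2]
  refine (mul_le_mul_of_nonneg_left hmain (Real.exp_pos _).le).trans (le_of_eq ?_)
  ring

/-- Cauchy's theorem for the kernel on `[d, R] × [0, π]`; the two horizontal edges combine because
translation by `iπ` multiplies the kernel by the constant `e^{i(α-1+b)π}`. -/
lemma contour_rect (α b : ℝ) {d R : ℝ} (hd : 0 < d) (hdR : d ≤ R) :
    (1 + Complex.exp (((α + b) * π : ℝ) * Complex.I))
        * ((∫ y in d..R, (2 * Real.sinh y) ^ (α - 1) * Real.exp (b * y) : ℝ) : ℂ)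
      + Complex.I * (∫ x in (0 : ℝ)..π, schKernel α b (R + x * Complex.I))
      - Complex.I * (∫ x in (0 : ℝ)..π, schKernel α b (d + x * Complex.I)) = 0 := by
  have hC := Complex.integral_boundary_rect_eq_zero_of_differentiableOn (schKernel α b)
    (d : ℂ) (R + π * Complex.I) (by
      intro z hz
      rw [Complex.mem_reProdIm] at hz
      have h := hz.1
      simp only [Complex.ofReal_re, Complex.add_re, Complex.mul_re, Complex.I_re, mul_zero,
        Complex.ofReal_im, Complex.I_im, mul_one, sub_self, add_zero] at h
      rw [Set.uIcc_of_le hdR] at h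
      exact (schKernel_differentiableAt α b
        (re_one_sub_exp_pos (hd.trans_le h.1))).differentiableWithinAt)
  have hbot : ∫ y in d..R, schKernel α b y
      = ((∫ y in d..R, (2 * Real.sinh y) ^ (α - 1) * Real.exp (b * y) : ℝ) : ℂ) := by
    rw [← intervalIntegral.integral_ofReal]
    refine intervalIntegral.integral_congr fun y hy => ?_
    rw [Set.uIcc_of_le hdR] at hy
    exact schKernel_ofReal α b (hd.trans_le hy.1)
  have htop : ∫ y in d..R, schKernel α b (y + π * Complex.I)
      = Complex.exp (((α - 1 + b) * π : ℝ) * Complex.I)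
        * ((∫ y in d..R, (2 * Real.sinh y) ^ (α - 1) * Real.exp (b * y) : ℝ) : ℂ) := by
    simp_rw [schKernel_add_pi]
    rw [intervalIntegral.integral_const_mul, hbot]
  have hE : Complex.exp (((α - 1 + b) * π : ℝ) * Complex.I)
      = -Complex.exp (((α + b) * π : ℝ) * Complex.I) := by
    have : (((α - 1 + b) * π : ℝ) : ℂ) * Complex.I
        = (((α + b) * π : ℝ) : ℂ) * Complex.I - π * Complex.I := by push_cast; ring
    rw [this, Complex.exp_sub, Complex.exp_pi_mul_I, div_neg, div_one]
  simp only [Complex.ofReal_re, Complex.add_re, Complex.mul_re, Complex.I_re, mul_zero,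
    Complex.ofReal_im, Complex.I_im, mul_one, sub_self, add_zero, Complex.add_im, Complex.mul_im,
    zero_add, Complex.ofReal_zero, zero_mul, smul_eq_mul] at hC
  rw [hbot, htop, hE] at hC
  rw [← hC]
  ring

lemma tendsto_right_side {α b : ℝ} (h1 : α < 1) (hb : α + b < 1) :
    Filter.Tendsto (fun k : ℕ => ∫ x in (0 : ℝ)..π,
      schKernel α b (((k + 1 : ℝ) : ℂ) + x * Complex.I)) Filter.atTop (nhds 0) := by
  have hlim : Filter.Tendsto (fun k : ℕ =>
      Real.exp ((α - 1 + b) * (k + 1 : ℝ)) * (1 / 2 : ℝ) ^ (α - 1) * |π - 0|)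
      Filter.atTop (nhds 0) := by
    have hk : Filter.Tendsto (fun k : ℕ => (k + 1 : ℝ)) Filter.atTop Filter.atTop :=
      Filter.tendsto_atTop_add_const_right _ _ tendsto_natCast_atTop_atTop
    have := Real.tendsto_exp_atBot.comp
      (hk.const_mul_atTop_of_neg (show α - 1 + b < 0 by linarith))
    simpa using! (this.mul_const ((1 / 2 : ℝ) ^ (α - 1))).mul_const |π - 0|
  refine squeeze_zero_norm (fun k => ?_) hlim
  refine intervalIntegral.norm_integral_le_of_norm_le_const fun x _ => ?_
  have hre : (((k + 1 : ℝ) : ℂ) + x * Complex.I).re = k + 1 := by simp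
  have hk1 : (1 : ℝ) ≤ k + 1 := by linarith [Nat.cast_nonneg (α := ℝ) k]
  rw [norm_schKernel α b (by rw [hre]; linarith), hre]
  refine mul_le_mul_of_nonneg_left ?_ (Real.exp_pos _).le
  refine Real.rpow_le_rpow_of_nonpos (by norm_num) ?_ (by linarith)
  have h2 : ‖Complex.exp (-2 * (((k + 1 : ℝ) : ℂ) + x * Complex.I))‖ ≤ 1 / 2 := by
    rw [Complex.norm_exp, show (-2 * (((k + 1 : ℝ) : ℂ) + x * Complex.I)).re
      = -(2 * (k + 1 : ℝ)) by simp, Real.exp_neg, ← one_div]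
    apply one_div_le_one_div_of_le (by norm_num)
    linarith [Real.add_one_le_exp (2 * (k + 1 : ℝ))]
  have h3 := norm_sub_norm_le (1 : ℂ) (Complex.exp (-2 * (((k + 1 : ℝ) : ℂ) + x * Complex.I)))
  rw [norm_one] at h3
  linarith

lemma tendsto_left_side {α : ℝ} (b : ℝ) (h0 : 0 < α) (h1 : α < 1) :
    Filter.Tendsto (fun k : ℕ => ∫ x in (0 : ℝ)..π,
      schKernel α b (((1 / (k + 1) : ℝ) : ℂ) + x * Complex.I)) Filter.atTop
      (nhds (∫ x in (0 : ℝ)..π, schKernel α b (x * Complex.I))) := by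
  have hd0 : ∀ k : ℕ, (0 : ℝ) < 1 / (k + 1) := fun k => by positivity
  have hd1 : ∀ k : ℕ, (1 : ℝ) / (k + 1) ≤ 1 := fun k => by
    rw [div_le_one (by positivity)]; linarith [Nat.cast_nonneg (α := ℝ) k]
  refine intervalIntegral.tendsto_integral_filter_of_dominated_convergence
    (fun x => Real.exp |b| * (2 * Real.sin x) ^ (α - 1)) ?_ ?_
    ((intervalIntegrable_sin_rpow h0 h1).const_mul _) ?_
  · refine Filter.Eventually.of_forall fun k => ?_
    refine Continuous.aestronglyMeasurable ?_
    refine continuous_iff_continuousAt.2 fun x => ?_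
    refine ContinuousAt.comp (f := fun x : ℝ => ((1 / (k + 1) : ℝ) : ℂ) + x * Complex.I)
      (g := schKernel α b) ?_ (by fun_prop)
    refine (schKernel_differentiableAt α b (re_one_sub_exp_pos ?_)).continuousAt
    rw [Complex.add_re, Complex.ofReal_re, Complex.re_ofReal_mul, Complex.I_re, mul_zero, add_zero]
    exact hd0 k
  · refine Filter.Eventually.of_forall fun k => ?_
    -- At `x = π` the junk value `0 ^ (α - 1) = 0` breaks the bound, so this null set is left out.
    filter_upwards [compl_mem_ae_iff.2 (Real.volume_singleton (a := π))] with x hxπ hx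
    rw [Set.uIoc_of_le Real.pi_pos.le] at hx
    have hxlt : x < π := lt_of_le_of_ne hx.2 hxπ
    have hs := Real.sin_pos_of_pos_of_lt_pi hx.1 hxlt
    have hk := hd0 k
    have hk' := hd1 k
    set d : ℝ := 1 / (k + 1)
    have hre : ((d : ℂ) + x * Complex.I).re = d := by simp
    rw [norm_schKernel α b (by rw [hre]; exact hk), hre]
    have hle := Real.rpow_le_rpow_of_nonpos (by positivity) (le_norm_one_sub_exp_of_sin d x)
      (show α - 1 ≤ 0 by linarith)
    refine (mul_le_mul_of_nonneg_left hle (Real.exp_pos _).le).trans ?_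
    rw [show 2 * Real.exp (-d) * Real.sin x = Real.exp (-d) * (2 * Real.sin x) by ring,
      Real.mul_rpow (Real.exp_pos _).le (by positivity), ← Real.exp_mul, ← mul_assoc,
      ← Real.exp_add]
    refine mul_le_mul_of_nonneg_right (Real.exp_le_exp.2 ?_) (by positivity)
    calc (α - 1 + b) * d + -d * (α - 1) = b * d := by ring
      _ ≤ |b| * d := mul_le_mul_of_nonneg_right (le_abs_self b) hk.le
      _ ≤ |b| := mul_le_of_le_one_right (abs_nonneg b) hk'
  · filter_upwards [compl_mem_ae_iff.2 (Real.volume_singleton (a := π))] with x hxπ hx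
    rw [Set.uIoc_of_le Real.pi_pos.le] at hx
    have hxlt : x < π := lt_of_le_of_ne hx.2 hxπ
    have hs := Real.sin_pos_of_pos_of_lt_pi hx.1 hxlt
    have hcont : ContinuousAt (schKernel α b) (x * Complex.I) := by
      refine (schKernel_differentiableAt α b ?_).continuousAt
      rw [one_sub_exp_imag, Complex.re_ofReal_mul, Complex.exp_ofReal_mul_I_re,
        Real.cos_pi_div_two_sub]
      positivity
    refine hcont.tendsto.comp ?_
    have h : Filter.Tendsto (fun k : ℕ => ((1 / (k + 1) : ℝ) : ℂ) + x * Complex.I) Filter.atTop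
        (nhds (((0 : ℝ) : ℂ) + x * Complex.I)) :=
      ((Complex.continuous_ofReal.tendsto 0).comp
        tendsto_one_div_add_atTop_nhds_zero_nat).add_const _
    simpa using! h

lemma tendsto_bottom_side {α b : ℝ} (h0 : 0 < α) (h1 : α < 1) (hb : α + b < 1) :
    Filter.Tendsto (fun k : ℕ => ∫ y in (1 / (k + 1) : ℝ)..(k + 1 : ℝ),
      (2 * Real.sinh y) ^ (α - 1) * Real.exp (b * y)) Filter.atTop
      (nhds (∫ y in Set.Ioi (0 : ℝ), (2 * Real.sinh y) ^ (α - 1) * Real.exp (b * y))) := by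
  have hk : Filter.Tendsto (fun k : ℕ => (k + 1 : ℝ)) Filter.atTop Filter.atTop :=
    Filter.tendsto_atTop_add_const_right _ _ tendsto_natCast_atTop_atTop
  have hcover : AECover (volume.restrict (Set.Ioi (0 : ℝ))) Filter.atTop
      (fun k : ℕ => Set.Ioc (1 / (k + 1) : ℝ) (k + 1 : ℝ)) :=
    (aecover_Ioi_of_Ioi tendsto_one_div_add_atTop_nhds_zero_nat).inter
      (aecover_Iic hk).restrict
  refine (hcover.integral_tendsto_of_countably_generated
    (integrableOn_sinh_rpow h0 h1 hb)).congr fun k => ?_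
  have hk0 : (0 : ℝ) < 1 / (k + 1) := by positivity
  have hle : (1 / (k + 1) : ℝ) ≤ k + 1 := by
    rw [div_le_iff₀ (by positivity)]; nlinarith [Nat.cast_nonneg (α := ℝ) k]
  rw [intervalIntegral.integral_of_le hle, Measure.restrict_restrict measurableSet_Ioc,
    Set.inter_eq_left.2 (Set.Ioc_subset_Ioi_self.trans (Set.Ioi_subset_Ioi hk0.le))]

lemma contour_complex {α b : ℝ} (h0 : 0 < α) (h1 : α < 1) (hb : α + b < 1) :
    (1 + Complex.exp (((α + b) * π : ℝ) * Complex.I))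
        * ((∫ y in Set.Ioi (0 : ℝ), (2 * Real.sinh y) ^ (α - 1) * Real.exp (b * y) : ℝ) : ℂ)
      = Complex.I * (∫ x in (0 : ℝ)..π, schKernel α b (x * Complex.I)) := by
  have hB := (Complex.continuous_ofReal.tendsto _).comp (tendsto_bottom_side h0 h1 hb)
  have hlim := ((hB.const_mul (1 + Complex.exp (((α + b) * π : ℝ) * Complex.I))).add
    ((tendsto_right_side h1 hb).const_mul Complex.I)).sub
    ((tendsto_left_side b h0 h1).const_mul Complex.I)
  have hzero := tendsto_nhds_unique (hlim.congr fun k => contour_rect α b (by positivity) (by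
    rw [div_le_iff₀ (by positivity)]; nlinarith [Nat.cast_nonneg (α := ℝ) k]))
    tendsto_const_nhds
  rw [mul_zero, add_zero] at hzero
  exact sub_eq_zero.1 hzero

/-- The real part of the contour identity after dividing out the phase `e^{iπα/2}`. -/
lemma contour_real {α b : ℝ} (h0 : 0 < α) (h1 : α < 1) (hb : α + b < 1) :
    (Real.cos (π * α / 2) + Real.cos (π * α / 2 + π * b))
        * (∫ y in Set.Ioi (0 : ℝ), (2 * Real.sinh y) ^ (α - 1) * Real.exp (b * y))
      = ∫ x in (0 : ℝ)..π, (2 * Real.sin x) ^ (α - 1) * Real.cos (b * x) := by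
  have hC := contour_complex h0 h1 hb
  have hint : IntervalIntegrable (fun x : ℝ => (((2 * Real.sin x) ^ (α - 1) : ℝ) : ℂ)
      * Complex.exp (((b * x : ℝ) : ℂ) * Complex.I)) volume 0 π := by
    have h : IntervalIntegrable (fun x : ℝ => (((2 * Real.sin x) ^ (α - 1) : ℝ) : ℂ)) volume 0 π :=
      ⟨(intervalIntegrable_sin_rpow h0 h1).1.ofReal, (intervalIntegrable_sin_rpow h0 h1).2.ofReal⟩
    exact h.mul_continuousOn (by fun_prop)
  have hK : ∫ x in (0 : ℝ)..π, schKernel α b (x * Complex.I)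
      = Complex.exp (((α - 1) * (π / 2) : ℝ) * Complex.I)
        * ∫ x in (0 : ℝ)..π, (((2 * Real.sin x) ^ (α - 1) : ℝ) : ℂ)
          * Complex.exp (((b * x : ℝ) : ℂ) * Complex.I) := by
    rw [← intervalIntegral.integral_const_mul, intervalIntegral.integral_of_le Real.pi_pos.le,
      intervalIntegral.integral_of_le Real.pi_pos.le, integral_Ioc_eq_integral_Ioo,
      integral_Ioc_eq_integral_Ioo]
    refine setIntegral_congr_fun measurableSet_Ioo fun x hx => ?_
    rw [schKernel_imag α b hx.1 hx.2, mul_left_comm, ← Complex.exp_add]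
    push_cast
    ring_nf
  set J := ∫ x in (0 : ℝ)..π, (((2 * Real.sin x) ^ (α - 1) : ℝ) : ℂ)
          * Complex.exp (((b * x : ℝ) : ℂ) * Complex.I) with hJ
  set C := ∫ y in Set.Ioi (0 : ℝ), (2 * Real.sinh y) ^ (α - 1) * Real.exp (b * y)
  have hJre : J.re = ∫ x in (0 : ℝ)..π, (2 * Real.sin x) ^ (α - 1) * Real.cos (b * x) := by
    have := Complex.reCLM.intervalIntegral_comp_comm hint
    simp only [Complex.reCLM_apply, Complex.re_ofReal_mul, Complex.exp_ofReal_mul_I_re] at this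
    exact this.symm
  have hphase : Complex.I * Complex.exp (((α - 1) * (π / 2) : ℝ) * Complex.I)
      = Complex.exp ((π * α / 2 : ℝ) * Complex.I) := by
    have : (((α - 1) * (π / 2) : ℝ) : ℂ) * Complex.I
        = ((π * α / 2 : ℝ) : ℂ) * Complex.I - π / 2 * Complex.I := by push_cast; ring
    rw [this, Complex.exp_sub, Complex.exp_pi_div_two_mul_I]
    field_simp
  rw [hK, ← mul_assoc, hphase] at hC
  have hmul : (Complex.exp ((-(π * α / 2) : ℝ) * Complex.I)
      + Complex.exp ((π * α / 2 + π * b : ℝ) * Complex.I)) * (C : ℂ) = J := by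
    have e1 : Complex.exp ((-(π * α / 2) : ℝ) * Complex.I)
        * Complex.exp ((π * α / 2 : ℝ) * Complex.I) = 1 := by
      rw [← Complex.exp_add]; push_cast; ring_nf; simp
    have e2 : Complex.exp ((-(π * α / 2) : ℝ) * Complex.I)
        * Complex.exp (((α + b) * π : ℝ) * Complex.I)
        = Complex.exp ((π * α / 2 + π * b : ℝ) * Complex.I) := by
      rw [← Complex.exp_add]; push_cast; ring_nf
    linear_combination Complex.exp ((-(π * α / 2) : ℝ) * Complex.I) * hC - (C : ℂ) * e2 + J * e1
  have hre := congrArg Complex.re hmul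
  rw [Complex.re_mul_ofReal, Complex.add_re, Complex.exp_ofReal_mul_I_re,
    Complex.exp_ofReal_mul_I_re, Real.cos_neg, hJre] at hre
  exact hre

/-- The identities `contour_real` for `b = 1/5` and `b = -1/5` have the same right-hand side, so they
express both halves of the `cosh` integral through the `cos` integral. -/
lemma ratio_core {α : ℝ} (h0 : 0 < α) (h1 : α < 4 / 5) :
    (∫ x in (0 : ℝ)..π, (2 * Real.sin x) ^ (α - 1) * Real.cos (1 / 5 * x)) /
      (∫ y in Set.Ioi (0 : ℝ), (2 * Real.sinh y) ^ (α - 1) * Real.cosh (1 / 5 * y))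
      = (Real.cos (π * α) + Real.cos (π / 5)) / Real.cos (π * α / 2) := by
  have hp := contour_real (b := 1 / 5) h0 (by linarith) (by linarith)
  have hm := contour_real (b := -(1 / 5)) h0 (by linarith) (by linarith)
  have hip := integrableOn_sinh_rpow (b := 1 / 5) h0 (by linarith) (by linarith)
  have him := integrableOn_sinh_rpow (b := -(1 / 5)) h0 (by linarith) (by linarith)
  simp only [neg_mul, Real.cos_neg] at hm him
  have hcosh : ∫ y in Set.Ioi (0 : ℝ), (2 * Real.sinh y) ^ (α - 1) * Real.cosh (1 / 5 * y)
      = ((∫ y in Set.Ioi (0 : ℝ), (2 * Real.sinh y) ^ (α - 1) * Real.exp (1 / 5 * y))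
        + ∫ y in Set.Ioi (0 : ℝ), (2 * Real.sinh y) ^ (α - 1) * Real.exp (-(1 / 5 * y))) / 2 := by
    rw [← integral_add hip him, ← MeasureTheory.integral_div]
    congr 1
    ext y
    rw [Real.cosh_eq]
    ring
  have hpos : 0 < ∫ y in Set.Ioi (0 : ℝ), (2 * Real.sinh y) ^ (α - 1) * Real.exp (1 / 5 * y) := by
    rw [setIntegral_pos_iff_support_of_nonneg_ae _ hip]
    · rw [Set.inter_eq_right.2]
      · simp
      · intro y (hy : 0 < y)
        have := Real.sinh_pos_iff.2 hy
        exact (by positivity : 0 < (2 * Real.sinh y) ^ (α - 1) * Real.exp (1 / 5 * y)).ne'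
    · rw [Filter.EventuallyLE, ae_restrict_iff' measurableSet_Ioi]
      refine Filter.Eventually.of_forall fun y (hy : 0 < y) => ?_
      have := Real.sinh_pos_iff.2 hy
      simp only [Pi.zero_apply]
      positivity
  rw [hcosh]
  set Cp := ∫ y in Set.Ioi (0 : ℝ), (2 * Real.sinh y) ^ (α - 1) * Real.exp (1 / 5 * y)
  set Cm := ∫ y in Set.Ioi (0 : ℝ), (2 * Real.sinh y) ^ (α - 1) * Real.exp (-(1 / 5 * y))
  set S := ∫ x in (0 : ℝ)..π, (2 * Real.sin x) ^ (α - 1) * Real.cos (1 / 5 * x)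
  have hπ := Real.pi_pos
  have hαπ : 0 < π * α := by positivity
  have hαπ' : π * α < 4 / 5 * π := by nlinarith
  set A := π * α / 2 with hA
  have cA : 0 < Real.cos A := Real.cos_pos_of_mem_Ioo ⟨by linarith, by linarith⟩
  have cB : 0 < Real.cos (π / 10) := Real.cos_pos_of_mem_Ioo ⟨by linarith, by linarith⟩
  have cP : 0 < Real.cos (A + π / 10) := Real.cos_pos_of_mem_Ioo ⟨by linarith, by linarith⟩
  have cM : 0 < Real.cos (A - π / 10) := Real.cos_pos_of_mem_Ioo ⟨by linarith, by linarith⟩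
  have eP : Real.cos A + Real.cos (A + π * (1 / 5))
      = 2 * Real.cos (A + π / 10) * Real.cos (π / 10) := by
    rw [Real.cos_add_cos, ← Real.cos_neg ((A - (A + π * (1 / 5))) / 2)]; ring_nf
  have eM : Real.cos A + Real.cos (A + π * -(1 / 5))
      = 2 * Real.cos (A - π / 10) * Real.cos (π / 10) := by
    rw [Real.cos_add_cos]; ring_nf
  have eN : Real.cos (π * α) + Real.cos (π / 5)
      = 2 * Real.cos (A + π / 10) * Real.cos (A - π / 10) := by
    rw [Real.cos_add_cos, hA]; ring_nf
  have eS : Real.cos (A + π / 10) + Real.cos (A - π / 10)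
      = 2 * Real.cos A * Real.cos (π / 10) := by
    rw [Real.cos_add_cos]; ring_nf
  rw [eP] at hp
  rw [eM] at hm
  have hCm : Real.cos (A - π / 10) * Cm = Real.cos (A + π / 10) * Cp :=
    mul_left_cancel₀ (show 2 * Real.cos (π / 10) ≠ 0 by positivity) (by linarith)
  have hCm0 : 0 < Cm := by
    have : 0 < Real.cos (A - π / 10) * Cm := by rw [hCm]; positivity
    exact (pos_iff_pos_of_mul_pos this).1 cM
  rw [eN, div_eq_div_iff (by positivity) cA.ne', ← hp]
  linear_combination (-(Real.cos (A + π / 10))) * hCm - Real.cos (A + π / 10) * Cp * eS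

/-! ### Uniformising substitutions -/

lemma cos_fifths :
    Real.cos (2 * π / 5) = (Real.sqrt 5 - 1) / 4 ∧ Real.cos (4 * π / 5) = -(1 + Real.sqrt 5) / 4 := by
  have h5 : Real.sqrt 5 ^ 2 = 5 := Real.sq_sqrt (by norm_num)
  constructor
  · rw [show 2 * π / 5 = 2 * (π / 5) by ring, Real.cos_two_mul, Real.cos_pi_div_five]
    nlinarith
  · rw [show 4 * π / 5 = π - π / 5 by ring, Real.cos_pi_sub, Real.cos_pi_div_five]
    ring

lemma quad_factor (u : ℝ) :
    (u - 2 * Real.cos (2 * π / 5)) * (u - 2 * Real.cos (4 * π / 5)) = u ^ 2 + u - 1 := by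
  have h5 : Real.sqrt 5 ^ 2 = 5 := Real.sq_sqrt (by norm_num)
  rw [cos_fifths.1, cos_fifths.2]
  nlinarith

/-- Stated so that the cofactor is `u ^ 2 + u - 1` at `u = 2 cos 2t`, matching `quad_factor`. -/
lemma sin_five_mul (t : ℝ) :
    Real.sin (5 * t)
      = Real.sin t * ((2 * Real.cos (2 * t)) ^ 2 + 2 * Real.cos (2 * t) - 1) := by
  have := Real.sin_sq_add_cos_sq t
  have hc : Real.cos t ^ 2 = 1 - Real.sin t ^ 2 := by linarith
  rw [show 5 * t = 3 * t + 2 * t by ring, Real.sin_add, Real.sin_three_mul, Real.cos_three_mul,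
    Real.sin_two_mul, Real.cos_two_mul]
  have h4 : Real.cos t ^ 4 = (1 - Real.sin t ^ 2) ^ 2 := by rw [← hc]; ring
  ring_nf
  rw [h4, hc]
  ring

lemma sinh_five_mul (t : ℝ) :
    Real.sinh (5 * t)
      = Real.sinh t * ((2 * Real.cosh (2 * t)) ^ 2 + 2 * Real.cosh (2 * t) - 1) := by
  have hc : Real.cosh t ^ 2 = Real.sinh t ^ 2 + 1 := Real.cosh_sq t
  rw [show 5 * t = 3 * t + 2 * t by ring, Real.sinh_add, Real.sinh_three_mul, Real.cosh_three_mul,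
    Real.sinh_two_mul, Real.cosh_two_mul]
  have h4 : Real.cosh t ^ 4 = (Real.sinh t ^ 2 + 1) ^ 2 := by rw [← hc]; ring
  ring_nf
  rw [h4, hc]
  ring

/-- The algebra behind both substitutions: with `s = sin (x/5)` or `s = sinh (x/5)`, the three
Schwarz–Christoffel factors and the Jacobian factor `2s` collapse to one power of
`w = sin x` or `w = sinh x`. -/
lemma rpow_combine {α s p q w : ℝ} (hs : 0 < s) (hp : 0 < p) (hq : 0 < q)
    (hw : w = s * (p * q)) :
    (4 * s ^ 2) ^ (α / 2 - 1) * p ^ (α - 1) * q ^ (α - 1) * (2 * s) = (2 * w) ^ (α - 1) := by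
  have h1 : (4 * s ^ 2) ^ (α / 2 - 1) * (2 * s) = (2 * s) ^ (α - 1) := by
    have h2s : 0 < 2 * s := by linarith
    rw [show 4 * s ^ 2 = (2 * s) ^ (2 : ℝ) by rw [Real.rpow_two]; ring, ← Real.rpow_mul h2s.le]
    nth_rewrite 2 [← Real.rpow_one (2 * s)]
    rw [← Real.rpow_add h2s]
    ring_nf
  rw [hw, ← mul_assoc 2 s, Real.mul_rpow (x := 2 * s) (y := p * q) (by positivity) (by positivity),
    Real.mul_rpow hp.le hq.le, ← h1]
  ring

lemma image_two_cos : (fun x : ℝ => 2 * Real.cos (2 / 5 * x)) '' Set.Ioo 0 π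
    = Set.Ioo (2 * Real.cos (2 * π / 5)) 2 := by
  ext u
  constructor
  · rintro ⟨x, ⟨hx0, hx1⟩, rfl⟩
    have h1 : Real.cos (2 * π / 5) < Real.cos (2 / 5 * x) :=
      Real.cos_lt_cos_of_nonneg_of_le_pi (by linarith) (by linarith [Real.pi_pos]) (by linarith)
    have h2 : Real.cos (2 / 5 * x) < Real.cos 0 :=
      Real.cos_lt_cos_of_nonneg_of_le_pi le_rfl (by linarith [Real.pi_pos]) (by linarith)
    rw [Real.cos_zero] at h2
    exact ⟨by simp only; linarith, by simp only; linarith⟩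
  · rintro ⟨hu0, hu1⟩
    have hl : Real.cos (2 * π / 5) < u / 2 := by linarith
    have hl' : -1 ≤ u / 2 := by linarith [Real.neg_one_le_cos (2 * π / 5)]
    refine ⟨5 / 2 * Real.arccos (u / 2), ⟨?_, ?_⟩, ?_⟩
    · have := Real.arccos_pos.2 (show u / 2 < 1 by linarith)
      linarith
    · have h := Real.arccos_lt_arccos (Real.neg_one_le_cos _) hl (by linarith)
      rw [Real.arccos_cos (by positivity) (by linarith [Real.pi_pos])] at h
      linarith
    · simp only
      rw [show 2 / 5 * (5 / 2 * Real.arccos (u / 2)) = Real.arccos (u / 2) by ring,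
        Real.cos_arccos hl' (by linarith)]
      ring

lemma image_two_cosh : (fun y : ℝ => 2 * Real.cosh (2 / 5 * y)) '' Set.Ioi 0 = Set.Ioi 2 := by
  ext u
  constructor
  · rintro ⟨y, hy : 0 < y, rfl⟩
    have : 1 < Real.cosh (2 / 5 * y) := Real.one_lt_cosh.2 (by positivity)
    simp only [Set.mem_Ioi]; linarith
  · intro (hu : 2 < u)
    refine ⟨5 / 2 * Real.arcosh (u / 2), ?_, ?_⟩
    · have := Real.arcosh_pos (show 1 < u / 2 by linarith)
      simp only [Set.mem_Ioi]; linarith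
    · simp only
      rw [show 2 / 5 * (5 / 2 * Real.arcosh (u / 2)) = Real.arcosh (u / 2) by ring,
        Real.cosh_arcosh (by linarith)]
      ring

/-- The substitution `u = 2 cos (2x/5)`. -/
lemma bounded_side_eq (α : ℝ) :
    (∫ u in (2 * Real.cos (2 * π / 5))..(2 : ℝ),
        (2 - u) ^ (α / 2 - 1) * (u - 2 * Real.cos (2 * π / 5)) ^ (α - 1)
          * (u - 2 * Real.cos (4 * π / 5)) ^ (α - 1))
      = 4 / 5 * ∫ x in (0 : ℝ)..π, (2 * Real.sin x) ^ (α - 1) * Real.cos (1 / 5 * x) := by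
  have hle : 2 * Real.cos (2 * π / 5) ≤ 2 := by linarith [Real.cos_le_one (2 * π / 5)]
  rw [integral_of_le hle, integral_of_le Real.pi_pos.le, integral_Ioc_eq_integral_Ioo,
    integral_Ioc_eq_integral_Ioo, ← image_two_cos, ← MeasureTheory.integral_const_mul,
    integral_image_eq_integral_abs_deriv_smul (f' := fun x => -(4 / 5 * Real.sin (2 / 5 * x)))
      measurableSet_Ioo]
  · refine setIntegral_congr_fun measurableSet_Ioo fun x hx => ?_
    simp only [smul_eq_mul]
    have him : 2 * Real.cos (2 / 5 * x) ∈ Set.Ioo (2 * Real.cos (2 * π / 5)) 2 := by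
      rw [← image_two_cos]; exact ⟨x, hx, rfl⟩
    obtain ⟨hx0, hx1⟩ := hx
    have hs : 0 < Real.sin (x / 5) :=
      Real.sin_pos_of_pos_of_lt_pi (by linarith) (by linarith)
    have hc : 0 < Real.cos (x / 5) :=
      Real.cos_pos_of_mem_Ioo ⟨by linarith, by linarith⟩
    have hp := sub_pos.2 him.1
    have hq : 0 < 2 * Real.cos (2 / 5 * x) - 2 * Real.cos (4 * π / 5) := by
      have h5 : 0 < Real.sqrt 5 := by positivity
      have h1 := cos_fifths.1
      have h2 := cos_fifths.2
      linarith
    have hw : Real.sin x = Real.sin (x / 5) * ((2 * Real.cos (2 / 5 * x) - 2 * Real.cos (2 * π / 5))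
        * (2 * Real.cos (2 / 5 * x) - 2 * Real.cos (4 * π / 5))) := by
      have := sin_five_mul (x / 5)
      rw [show 5 * (x / 5) = x by ring, show 2 * (x / 5) = 2 / 5 * x by ring] at this
      rw [quad_factor, this]
    have h2 : 2 - 2 * Real.cos (2 / 5 * x) = 4 * Real.sin (x / 5) ^ 2 := by
      rw [show 2 / 5 * x = 2 * (x / 5) by ring, Real.cos_two_mul, Real.cos_sq']; ring
    rw [← rpow_combine hs hp hq hw, h2, show Real.sin (2 / 5 * x)
      = 2 * Real.sin (x / 5) * Real.cos (x / 5) by rw [← Real.sin_two_mul]; ring_nf,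
      abs_neg, abs_of_pos (by positivity), show 1 / 5 * x = x / 5 by ring]
    ring
  · intro x _
    have h : HasDerivAt (fun x : ℝ => 2 * Real.cos (2 / 5 * x))
        (2 * (-Real.sin (2 / 5 * x) * (2 / 5 * 1))) x :=
      (((hasDerivAt_id x).const_mul (2 / 5)).cos).const_mul 2
    refine HasDerivAt.hasDerivWithinAt (h.congr_deriv ?_)
    ring
  · intro x hx y hy h
    have := Real.injOn_cos (x₁ := 2 / 5 * x) (x₂ := 2 / 5 * y)
      ⟨by linarith [hx.1], by linarith [hx.2, Real.pi_pos]⟩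
      ⟨by linarith [hy.1], by linarith [hy.2, Real.pi_pos]⟩ (by simp only at h; linarith)
    linarith

/-- The substitution `u = 2 cosh (2y/5)`. -/
lemma unbounded_side_eq (α : ℝ) :
    (∫ u in Set.Ioi (2 : ℝ),
        (u - 2) ^ (α / 2 - 1) * (u - 2 * Real.cos (2 * π / 5)) ^ (α - 1)
          * (u - 2 * Real.cos (4 * π / 5)) ^ (α - 1))
      = 4 / 5 * ∫ y in Set.Ioi (0 : ℝ), (2 * Real.sinh y) ^ (α - 1) * Real.cosh (1 / 5 * y) := by
  rw [← image_two_cosh, ← MeasureTheory.integral_const_mul,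
    integral_image_eq_integral_abs_deriv_smul (f' := fun x => 4 / 5 * Real.sinh (2 / 5 * x))
      measurableSet_Ioi]
  · refine setIntegral_congr_fun measurableSet_Ioi fun x hx => ?_
    simp only [smul_eq_mul]
    have him : 2 * Real.cosh (2 / 5 * x) ∈ Set.Ioi 2 := by
      rw [← image_two_cosh]; exact ⟨x, hx, rfl⟩
    replace hx : 0 < x := hx
    replace him : 2 < 2 * Real.cosh (2 / 5 * x) := him
    have hs : 0 < Real.sinh (x / 5) := Real.sinh_pos_iff.2 (by linarith)
    have hc : 0 < Real.cosh (x / 5) := Real.cosh_pos _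
    have hp : 0 < 2 * Real.cosh (2 / 5 * x) - 2 * Real.cos (2 * π / 5) := by
      linarith [Real.cos_le_one (2 * π / 5)]
    have hq : 0 < 2 * Real.cosh (2 / 5 * x) - 2 * Real.cos (4 * π / 5) := by
      linarith [Real.cos_le_one (4 * π / 5)]
    have hw : Real.sinh x
        = Real.sinh (x / 5) * ((2 * Real.cosh (2 / 5 * x) - 2 * Real.cos (2 * π / 5))
        * (2 * Real.cosh (2 / 5 * x) - 2 * Real.cos (4 * π / 5))) := by
      have := sinh_five_mul (x / 5)
      rw [show 5 * (x / 5) = x by ring, show 2 * (x / 5) = 2 / 5 * x by ring] at this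
      rw [quad_factor, this]
    have h2 : 2 * Real.cosh (2 / 5 * x) - 2 = 4 * Real.sinh (x / 5) ^ 2 := by
      rw [show 2 / 5 * x = 2 * (x / 5) by ring, Real.cosh_two_mul, Real.cosh_sq]; ring
    rw [← rpow_combine hs hp hq hw, h2, show Real.sinh (2 / 5 * x)
      = 2 * Real.sinh (x / 5) * Real.cosh (x / 5) by rw [← Real.sinh_two_mul]; ring_nf,
      abs_of_pos (by positivity), show 1 / 5 * x = x / 5 by ring]
    ring
  · intro x _
    have h : HasDerivAt (fun x : ℝ => 2 * Real.cosh (2 / 5 * x))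
        (2 * (Real.sinh (2 / 5 * x) * (2 / 5 * 1))) x :=
      (((hasDerivAt_id x).const_mul (2 / 5)).cosh).const_mul 2
    refine HasDerivAt.hasDerivWithinAt (h.congr_deriv ?_)
    ring
  · intro x hx y hy h
    replace hx : 0 < x := hx
    replace hy : 0 < y := hy
    have hxy : Real.cosh (2 / 5 * x) = Real.cosh (2 / 5 * y) := by simp only at h; linarith
    have := congrArg Real.arcosh hxy
    rw [Real.arcosh_cosh (by linarith), Real.arcosh_cosh (by linarith)] at this
    linarith

/-! ### The side ratio -/

/-- For `n ≥ 7` odd, `5 ∤ n`, the ratio of the Schwarz–Christoffel side lengths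
`|I₃| = ∫_{2cos(2π/5)}^{2} (2−u)^{1/2n−1}(u−2cos(2π/5))^{1/n−1}(u−2cos(4π/5))^{1/n−1} du` and
`|I₄| = ∫_{2}^{∞} (u−2)^{1/2n−1}(u−2cos(2π/5))^{1/n−1}(u−2cos(4π/5))^{1/n−1} du` equals
`(cos(π/n) + cos(π/5))/cos(π/2n)`; hence the Schwarz–Christoffel quadrilateral
`T[5,n,∞]` is similar to the billiard table `T(5,n,∞)`. -/
theorem schwarz_christoffel_side_ratio_5_n
    (n : ℕ) (hn : 7 ≤ n) (hodd : Odd n) (h5 : ¬ (5 ∣ n)) :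
    (∫ u in (2 * Real.cos (2 * π / 5))..(2 : ℝ),
        (2 - u) ^ ((1 : ℝ) / (2 * n) - 1) * (u - 2 * Real.cos (2 * π / 5)) ^ ((1 : ℝ) / n - 1)
          * (u - 2 * Real.cos (4 * π / 5)) ^ ((1 : ℝ) / n - 1)) /
      (∫ u in Set.Ioi (2 : ℝ),
        (u - 2) ^ ((1 : ℝ) / (2 * n) - 1) * (u - 2 * Real.cos (2 * π / 5)) ^ ((1 : ℝ) / n - 1)
          * (u - 2 * Real.cos (4 * π / 5)) ^ ((1 : ℝ) / n - 1))
      = (Real.cos (π / n) + Real.cos (π / 5)) / Real.cos (π / (2 * n)) := by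
  have hn0 : (0 : ℝ) < n := by
    have : 0 < n := by omega
    exact_mod_cast this
  have hn7 : (7 : ℝ) ≤ n := by exact_mod_cast hn
  have hα : (1 : ℝ) / n < 4 / 5 := by
    rw [div_lt_iff₀ hn0]; linarith
  have e1 : (1 : ℝ) / (2 * n) = 1 / n / 2 := by
    field_simp
  have e2 : π / n = π * (1 / n) := by ring
  have e3 : π / (2 * n) = π * (1 / n) / 2 := by
    field_simp
  rw [e1, bounded_side_eq, unbounded_side_eq, mul_div_mul_left _ _ (by norm_num), e2, e3]
  exact ratio_core (by positivity) hα

end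
end
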